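/- arXiv:2203.08767 — 2 statements merged into one kernel-verified Lean document; each statement's English description precedes it below -/
import Mathlib

section
/- Fix 0 < R < Q and s > 0. Let A_{R,Q} = {p ∈ ℝ² : R ≤ ‖p‖ ≤ Q} and define γ : (0,∞) → ℝ by γ(c) = vol(A_{R,Q} ∩ B(p_c,s)). For r ∈ {R,Q} define y_r(c) to be the maximum of the second coordinates of points of C(O,r) ∩ C(p_c,s) if this intersection is nonempty, and y_r(c) = 0 otherwise. Then for every c > 0, γ has derivative 2·y_R(c) − 2·y_Q(c) at c. -/
open Set MeasureTheory Metric
open scoped Classical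

/-- The point `(c, 0)` in the Euclidean plane. -/
noncomputable def pc (c : ℝ) : EuclideanSpace ℝ (Fin 2) :=
  (WithLp.equiv 2 (Fin 2 → ℝ)).symm ![c, 0]

/-- Length of the horizontal slice at height `y` of the lens. -/
noncomputable def sliceLen (r s c y : ℝ) : ℝ :=
  max 0 (min (√(r ^ 2 - y ^ 2)) (c + √(s ^ 2 - y ^ 2)) -
    max (-√(r ^ 2 - y ^ 2)) (c - √(s ^ 2 - y ^ 2)))

lemma sliceLen_eq_zero (r s c y : ℝ) (h : r ^ 2 ≤ y ^ 2) : sliceLen r s c y = 0 := by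
  have h0 : √(r ^ 2 - y ^ 2) = 0 := Real.sqrt_eq_zero_of_nonpos (by linarith)
  have hb := Real.sqrt_nonneg (s ^ 2 - y ^ 2)
  unfold sliceLen
  rw [h0]
  apply max_eq_left
  have h1 := min_le_left (0:ℝ) (c + √(s ^ 2 - y ^ 2))
  have h2 := le_max_left (-0:ℝ) (c - √(s ^ 2 - y ^ 2))
  linarith

lemma volume_slice (r s c y : ℝ) :
    volume {x : ℝ | x ^ 2 + y ^ 2 ≤ r ^ 2 ∧ (x - c) ^ 2 + y ^ 2 < s ^ 2}
      = ENNReal.ofReal (sliceLen r s c y) := by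
  by_cases h : r ^ 2 < y ^ 2
  · rw [sliceLen_eq_zero r s c y h.le]
    have : {x : ℝ | x ^ 2 + y ^ 2 ≤ r ^ 2 ∧ (x - c) ^ 2 + y ^ 2 < s ^ 2} = ∅ := by
      ext x
      simp only [mem_ofPred_eq, mem_empty_iff_false, iff_false]
      rintro ⟨h1, -⟩
      nlinarith [sq_nonneg x]
    simp [this]
  · have h' : 0 ≤ r ^ 2 - y ^ 2 := by linarith
    have e : {x : ℝ | x ^ 2 + y ^ 2 ≤ r ^ 2 ∧ (x - c) ^ 2 + y ^ 2 < s ^ 2}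
        = Icc (-√(r ^ 2 - y ^ 2)) (√(r ^ 2 - y ^ 2)) ∩
          Ioo (c - √(s ^ 2 - y ^ 2)) (c + √(s ^ 2 - y ^ 2)) := by
      ext x
      simp only [mem_ofPred_eq, mem_inter_iff, mem_Icc, mem_Ioo]
      have h1 : x ^ 2 + y ^ 2 ≤ r ^ 2 ↔ |x| ≤ √(r ^ 2 - y ^ 2) := by
        rw [Real.le_sqrt (abs_nonneg x) h', sq_abs]
        constructor <;> intro h <;> linarith
      have h2 : (x - c) ^ 2 + y ^ 2 < s ^ 2 ↔ |x - c| < √(s ^ 2 - y ^ 2) := by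
        rw [Real.lt_sqrt (abs_nonneg _), sq_abs]
        constructor <;> intro h <;> linarith
      rw [h1, h2, abs_le, abs_lt]
      constructor
      · rintro ⟨⟨_, _⟩, _, _⟩
        refine ⟨⟨?_, ?_⟩, ?_, ?_⟩ <;> linarith
      · rintro ⟨⟨_, _⟩, _, _⟩
        refine ⟨⟨?_, ?_⟩, ?_, ?_⟩ <;> linarith
    rw [e, measure_congr (Filter.EventuallyEq.rfl.inter Ioo_ae_eq_Icc), Icc_inter_Icc,
      Real.volume_Icc]
    unfold sliceLen
    rw [ENNReal.ofReal_max]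
    simp

lemma sliceLen_nonneg (r s c y : ℝ) : 0 ≤ sliceLen r s c y := le_max_left _ _

lemma sliceLen_continuous (r s c : ℝ) : Continuous (sliceLen r s c) := by
  unfold sliceLen
  fun_prop

lemma sliceLen_lip (r s y c d : ℝ) :
    |sliceLen r s c y - sliceLen r s d y| ≤ 2 * |c - d| := by
  unfold sliceLen
  set a := √(r ^ 2 - y ^ 2)
  set b := √(s ^ 2 - y ^ 2)
  have h1 := abs_max_sub_max_le_abs (min a (c + b) - max (-a) (c - b))
    (min a (d + b) - max (-a) (d - b)) 0
  have h2 := abs_min_sub_min_le_max a (c + b) a (d + b)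
  have h3 := abs_max_sub_max_le_max (-a) (c - b) (-a) (d - b)
  have e1 : c + b - (d + b) = c - d := by ring
  have e2 : c - b - (d - b) = c - d := by ring
  rw [e1, sub_self, abs_zero, max_eq_right (abs_nonneg (c - d))] at h2
  rw [e2, sub_self, abs_zero, max_eq_right (abs_nonneg (c - d))] at h3
  rw [max_comm 0, max_comm 0]
  refine h1.trans ?_
  rw [abs_le] at *
  obtain ⟨_, _⟩ := h2
  obtain ⟨_, _⟩ := h3
  constructor <;> linarith

/-- The squared height of the intersection points. -/
noncomputable def hgt (r s c : ℝ) : ℝ := r ^ 2 - ((r ^ 2 - s ^ 2 + c ^ 2) / (2 * c)) ^ 2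

lemma hgt_le (r s c : ℝ) (hc : 0 < c) : hgt r s c ≤ r ^ 2 ∧ hgt r s c ≤ s ^ 2 := by
  constructor
  · unfold hgt
    nlinarith [sq_nonneg ((r ^ 2 - s ^ 2 + c ^ 2) / (2 * c))]
  · have : hgt r s c = s ^ 2 - (c - (r ^ 2 - s ^ 2 + c ^ 2) / (2 * c)) ^ 2 := by
      unfold hgt
      field_simp
      ring
    rw [this]
    nlinarith [sq_nonneg (c - (r ^ 2 - s ^ 2 + c ^ 2) / (2 * c))]

lemma hgt_key (r s c y : ℝ) (hc : 0 < c) (hr : y ^ 2 ≤ r ^ 2) (hs : y ^ 2 ≤ s ^ 2) :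
    4 * c ^ 2 * (hgt r s c - y ^ 2) =
    ((√(r ^ 2 - y ^ 2) + √(s ^ 2 - y ^ 2)) ^ 2 - c ^ 2) *
      (c ^ 2 - (√(r ^ 2 - y ^ 2) - √(s ^ 2 - y ^ 2)) ^ 2) := by
  have ha := Real.sq_sqrt (sub_nonneg.2 hr)
  have hb := Real.sq_sqrt (sub_nonneg.2 hs)
  set a := √(r ^ 2 - y ^ 2)
  set b := √(s ^ 2 - y ^ 2)
  have e : 4 * c ^ 2 * (hgt r s c - y ^ 2)
      = 4 * c ^ 2 * (r ^ 2 - y ^ 2) - ((r ^ 2 - y ^ 2) - (s ^ 2 - y ^ 2) + c ^ 2) ^ 2 := by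
    unfold hgt
    field_simp
    ring
  rw [e, ← ha, ← hb]
  ring

lemma sliceLen_deriv (r s c y : ℝ) (hc : 0 < c) (hr : y ^ 2 < r ^ 2)
    (hs : y ^ 2 ≠ s ^ 2) (hy : y ^ 2 ≠ hgt r s c) :
    HasDerivAt (fun c => sliceLen r s c y)
      ({y : ℝ | y ^ 2 < hgt r s c}.indicator (fun _ => (-1 : ℝ)) y) c := by
  rcases lt_or_gt_of_ne hs with hs | hs
  swap
  · have : (fun c => sliceLen r s c y) = fun _ => 0 := by
      funext c
      have h0 : √(s ^ 2 - y ^ 2) = 0 := Real.sqrt_eq_zero_of_nonpos (by linarith)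
      unfold sliceLen
      rw [h0]
      apply max_eq_left
      have h1 := min_le_right (√(r ^ 2 - y ^ 2)) (c + 0)
      have h2 := le_max_right (-√(r ^ 2 - y ^ 2)) (c - 0)
      linarith
    rw [this, indicator_of_notMem]
    · exact hasDerivAt_const _ _
    · have := (hgt_le r s c hc).2
      simp only [mem_ofPred_eq]
      linarith
  have key := hgt_key r s c y hc hr.le hs.le
  have ha : 0 < √(r ^ 2 - y ^ 2) := Real.sqrt_pos.2 (by linarith)
  have hb : 0 < √(s ^ 2 - y ^ 2) := Real.sqrt_pos.2 (by linarith)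
  unfold sliceLen
  set a := √(r ^ 2 - y ^ 2)
  set b := √(s ^ 2 - y ^ 2)
  have hc4 : 0 < 4 * c ^ 2 := by positivity
  have hne : 4 * c ^ 2 * (hgt r s c - y ^ 2) ≠ 0 :=
    mul_ne_zero hc4.ne' (sub_ne_zero.2 hy.symm)
  rcases lt_trichotomy c (a + b) with h1 | h1 | h1
  · rcases lt_trichotomy c |a - b| with h2 | h2 | h2
    · -- contained
      have hm : y ∉ {y : ℝ | y ^ 2 < hgt r s c} := by
        simp only [mem_ofPred_eq]
        intro h
        have p1 : 0 < 4 * c ^ 2 * (hgt r s c - y ^ 2) := mul_pos hc4 (by linarith)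
        have p2 : c ^ 2 < (a - b) ^ 2 := by
          rw [← sq_abs (a - b)]
          exact pow_lt_pow_left₀ h2 hc.le (by norm_num)
        have p3 : c ^ 2 < (a + b) ^ 2 := pow_lt_pow_left₀ h1 hc.le (by norm_num)
        nlinarith
      rw [indicator_of_notMem hm]
      rcases lt_abs.1 h2 with h3 | h3
      · refine (hasDerivAt_const c (2 * b)).congr_of_eventuallyEq ?_
        filter_upwards [Ioo_mem_nhds hc h3] with d hd
        rw [min_eq_right (by linarith [hd.2]), max_eq_right (a := -a) (by linarith [hd.1]),
          max_eq_right (by linarith)]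
        ring
      · refine (hasDerivAt_const c (2 * a)).congr_of_eventuallyEq ?_
        filter_upwards [Ioo_mem_nhds hc h3] with d hd
        rw [min_eq_left (by linarith [hd.1]), max_eq_left (a := -a) (by linarith [hd.2]),
          max_eq_right (by linarith)]
        ring
    · exfalso
      apply hne
      rw [key, h2, sq_abs]
      ring
    · have hm : y ∈ {y : ℝ | y ^ 2 < hgt r s c} := by
        simp only [mem_ofPred_eq]
        have p2 : (a - b) ^ 2 < c ^ 2 := by
          rw [← sq_abs (a - b)]
          exact pow_lt_pow_left₀ h2 (abs_nonneg _) (by norm_num)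
        have p3 : c ^ 2 < (a + b) ^ 2 := pow_lt_pow_left₀ h1 hc.le (by norm_num)
        have p1 : 0 < 4 * c ^ 2 * (hgt r s c - y ^ 2) := by
          rw [key]
          exact mul_pos (by linarith) (by linarith)
        have := (mul_pos_iff_of_pos_left hc4).1 p1
        linarith
      rw [indicator_of_mem hm]
      refine ((hasDerivAt_id c).const_sub (a + b)).congr_of_eventuallyEq ?_
      filter_upwards [Ioo_mem_nhds h2 h1] with d hd
      have := abs_lt.1 hd.1
      simp only [id]
      rw [min_eq_left (by linarith [hd.1]), max_eq_right (a := -a) (by linarith [hd.2]),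
          max_eq_right (by linarith [hd.2])]
      ring
  · exfalso
    apply hne
    rw [key, h1]
    ring
  · have hm : y ∉ {y : ℝ | y ^ 2 < hgt r s c} := by
      simp only [mem_ofPred_eq]
      intro h
      have p1 : 0 < 4 * c ^ 2 * (hgt r s c - y ^ 2) := mul_pos hc4 (by linarith)
      have p3 : (a + b) ^ 2 < c ^ 2 := pow_lt_pow_left₀ h1 (by positivity) (by norm_num)
      have p2 : (a - b) ^ 2 < c ^ 2 := by nlinarith
      nlinarith
    rw [indicator_of_notMem hm]
    refine (hasDerivAt_const c 0).congr_of_eventuallyEq ?_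
    filter_upwards [Ioi_mem_nhds h1] with d hd
    apply max_eq_left
    have h1 := min_le_left a (d + b)
    have h2 := le_max_right (-a) (d - b)
    have : a + b < d := hd
    linarith

lemma null_sq (t : ℝ) : ∀ᵐ y : ℝ, y ^ 2 ≠ t := by
  have hf : ({√t, -√t} : Set ℝ).Finite := by simp
  have := hf.measure_zero (volume : Measure ℝ)
  refine measure_mono_null ?_ this
  intro y hy
  simp only [mem_compl_iff, mem_ofPred_eq, not_not] at hy
  have : |y| = √t := by rw [← hy, Real.sqrt_sq_eq_abs]
  rcases abs_choice y with h | h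
  · left; linarith
  · right; simp only [mem_singleton_iff]; linarith

lemma integral_indicator_hgt (r t : ℝ) (hr : 0 < r) (ht : t ≤ r ^ 2) :
    ∫ y in Ioo (-r) r, ({y : ℝ | y ^ 2 < t}.indicator (fun _ => (-1 : ℝ)) y) = -(2 * √t) := by
  have e : {y : ℝ | y ^ 2 < t} = Ioo (-√t) (√t) := by
    ext y
    simp only [mem_ofPred_eq, mem_Ioo]
    rw [← abs_lt, Real.lt_sqrt (abs_nonneg _), sq_abs]
  have hs : √t ≤ r := Real.sqrt_le_iff.2 ⟨hr.le, ht⟩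
  rw [e, setIntegral_indicator measurableSet_Ioo, inter_eq_right.2 (Ioo_subset_Ioo (by linarith) hs)]
  rw [setIntegral_const, measureReal_def, Real.volume_Ioo, ENNReal.toReal_ofReal]
  · simp only [smul_eq_mul]; ring
  · linarith [Real.sqrt_nonneg t]

lemma integral_sliceLen_deriv (r s c : ℝ) (hr : 0 < r) (hs : 0 < s) (hc : 0 < c) :
    HasDerivAt (fun c => ∫ y in Ioo (-r) r, sliceLen r s c y) (-(2 * √(hgt r s c))) c := by
  rw [← integral_indicator_hgt r _ hr (hgt_le r s c hc).1]
  refine (hasDerivAt_integral_of_dominated_loc_of_lip (bound := fun _ => (2:ℝ))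
    (s := univ) Filter.univ_mem ?_ ?_ ?_ ?_ ?_ ?_).2
  · exact Filter.Eventually.of_forall fun c => (sliceLen_continuous r s c).aestronglyMeasurable
  · exact ((sliceLen_continuous r s c).integrableOn_Icc (a := -r) (b := r)).mono_set
      Ioo_subset_Icc_self
  · apply Measurable.aestronglyMeasurable
    apply measurable_const.indicator
    exact measurableSet_lt (by fun_prop) measurable_const
  · refine Filter.Eventually.of_forall fun y => ?_
    refine LipschitzOnWith.of_dist_le_mul fun c _ d _ => ?_
    rw [Real.dist_eq, Real.dist_eq]
    simpa using sliceLen_lip r s y c d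
  · exact integrable_const _
  · filter_upwards [ae_restrict_of_ae (null_sq (s ^ 2)), ae_restrict_of_ae (null_sq (hgt r s c)),
      ae_restrict_mem measurableSet_Ioo] with y h1 h2 h3
    exact sliceLen_deriv r s c y hc (sq_lt_sq' h3.1 h3.2) h1 h2

lemma volume_lens (r s c : ℝ) (hr : 0 < r) (hs : 0 < s) :
    (volume (closedBall (0 : EuclideanSpace ℝ (Fin 2)) r ∩ ball (pc c) s)).toReal
      = ∫ y in Ioo (-r) r, sliceLen r s c y := by
  have hmp := (volume_preserving_finTwoArrow ℝ).comp
    (EuclideanSpace.volume_preserving_symm_measurableEquiv_toLp (Fin 2))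
  set S : Set (ℝ × ℝ) := {q | q.1 ^ 2 + q.2 ^ 2 ≤ r ^ 2 ∧ (q.1 - c) ^ 2 + q.2 ^ 2 < s ^ 2}
    with hS
  have hSm : MeasurableSet S := by
    have h1 : MeasurableSet {q : ℝ × ℝ | q.1 ^ 2 + q.2 ^ 2 ≤ r ^ 2} :=
      measurableSet_le (by fun_prop) measurable_const
    have h2 : MeasurableSet {q : ℝ × ℝ | (q.1 - c) ^ 2 + q.2 ^ 2 < s ^ 2} :=
      measurableSet_lt (by fun_prop) measurable_const
    exact h1.inter h2
  have e : closedBall (0 : EuclideanSpace ℝ (Fin 2)) r ∩ ball (pc c) s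
      = (MeasurableEquiv.finTwoArrow ∘ (MeasurableEquiv.toLp 2 (Fin 2 → ℝ)).symm) ⁻¹' S := by
    ext p
    simp only [mem_inter_iff, mem_closedBall, mem_ball, dist_zero_right, mem_preimage, hS,
      mem_ofPred_eq, EuclideanSpace.norm_eq, EuclideanSpace.dist_eq, Fin.sum_univ_two]
    rw [Real.sqrt_le_left hr.le, Real.sqrt_lt' hs]
    simp [pc, MeasurableEquiv.finTwoArrow, Real.dist_eq, sq_abs]
  rw [e, hmp.measure_preimage hSm.nullMeasurableSet]
  rw [Measure.volume_eq_prod, Measure.prod_apply_symm hSm]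
  have e2 : ∀ y : ℝ, volume ((fun x : ℝ => (x, y)) ⁻¹' S)
      = ENNReal.ofReal (sliceLen r s c y) := fun y => volume_slice r s c y
  simp_rw [e2]
  rw [← integral_eq_lintegral_of_nonneg_ae
    (Filter.Eventually.of_forall fun y => sliceLen_nonneg r s c y)
    (sliceLen_continuous r s c).aestronglyMeasurable]
  symm
  apply setIntegral_eq_integral_of_forall_compl_eq_zero
  intro y hy
  apply sliceLen_eq_zero
  by_contra h
  exact hy (abs_lt.1 (abs_lt_of_sq_lt_sq (not_le.1 h) hr.le))

lemma y_eq (r s c : ℝ) (hr : 0 < r) (hs : 0 < s) (hc : 0 < c) :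
    (if (sphere (0 : EuclideanSpace ℝ (Fin 2)) r ∩ sphere (pc c) s).Nonempty then
        sSup ((fun p : EuclideanSpace ℝ (Fin 2) => p 1) ''
          (sphere (0 : EuclideanSpace ℝ (Fin 2)) r ∩ sphere (pc c) s))
      else 0) = √(hgt r s c) := by
  have hmem : ∀ p : EuclideanSpace ℝ (Fin 2),
      p ∈ sphere (0 : EuclideanSpace ℝ (Fin 2)) r ∩ sphere (pc c) s ↔
      p 0 ^ 2 + p 1 ^ 2 = r ^ 2 ∧ (p 0 - c) ^ 2 + p 1 ^ 2 = s ^ 2 := by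
    intro p
    simp only [mem_inter_iff, mem_sphere, dist_zero_right, EuclideanSpace.norm_eq,
      EuclideanSpace.dist_eq, Fin.sum_univ_two]
    rw [Real.sqrt_eq_iff_eq_sq (by positivity) hr.le,
      Real.sqrt_eq_iff_eq_sq (by positivity) hs.le]
    simp [pc, Real.dist_eq, sq_abs]
  have hsq : ∀ p ∈ sphere (0 : EuclideanSpace ℝ (Fin 2)) r ∩ sphere (pc c) s,
      p 1 ^ 2 = hgt r s c := by
    intro p hp
    obtain ⟨h1, h2⟩ := (hmem p).1 hp
    have : p 0 = (r ^ 2 - s ^ 2 + c ^ 2) / (2 * c) := by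
      field_simp
      linarith
    unfold hgt
    rw [← this]
    linarith
  split_ifs with h
  · have h0 : 0 ≤ hgt r s c := by
      obtain ⟨p, hp⟩ := h
      rw [← hsq p hp]
      positivity
    apply IsGreatest.csSup_eq
    constructor
    · refine ⟨!₂[(r ^ 2 - s ^ 2 + c ^ 2) / (2 * c), √(hgt r s c)], ?_, by simp⟩
      rw [hmem]
      simp only [Matrix.cons_val_zero, Matrix.cons_val_one]
      rw [Real.sq_sqrt h0]
      unfold hgt
      constructor
      · ring
      · field_simp
        ring
    · rintro _ ⟨p, hp, rfl⟩
      exact Real.le_sqrt_of_sq_le (hsq p hp).le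
  · symm
    apply Real.sqrt_eq_zero_of_nonpos
    by_contra h0
    push Not at h0
    apply h
    refine ⟨!₂[(r ^ 2 - s ^ 2 + c ^ 2) / (2 * c), √(hgt r s c)], ?_⟩
    rw [hmem]
    simp only [Matrix.cons_val_zero, Matrix.cons_val_one]
    rw [Real.sq_sqrt h0.le]
    unfold hgt
    constructor
    · ring
    · field_simp
      ring

lemma annulus_eq (R Q s c : ℝ) (hR : 0 < R) (hRQ : R < Q) :
    (volume ({p : EuclideanSpace ℝ (Fin 2) | R ≤ ‖p‖ ∧ ‖p‖ ≤ Q} ∩ ball (pc c) s)).toReal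
    = (volume (closedBall (0 : EuclideanSpace ℝ (Fin 2)) Q ∩ ball (pc c) s)).toReal
      - (volume (closedBall (0 : EuclideanSpace ℝ (Fin 2)) R ∩ ball (pc c) s)).toReal := by
  have e : {p : EuclideanSpace ℝ (Fin 2) | R ≤ ‖p‖ ∧ ‖p‖ ≤ Q} ∩ ball (pc c) s
      = (closedBall (0 : EuclideanSpace ℝ (Fin 2)) Q ∩ ball (pc c) s) \
        (ball (0 : EuclideanSpace ℝ (Fin 2)) R ∩ ball (pc c) s) := by
    ext p
    simp only [mem_inter_iff, mem_ofPred_eq, mem_sdiff, mem_closedBall, dist_zero_right,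
      mem_ball_zero_iff, not_and]
    constructor
    · rintro ⟨⟨h1, h2⟩, h3⟩
      exact ⟨⟨h2, h3⟩, fun h => absurd h (not_lt.2 h1)⟩
    · rintro ⟨⟨h2, h3⟩, h⟩
      exact ⟨⟨not_lt.1 fun h1 => h h1 h3, h2⟩, h3⟩
  have hae : (ball (0 : EuclideanSpace ℝ (Fin 2)) R : Set _)
      =ᵐ[volume] closedBall (0 : EuclideanSpace ℝ (Fin 2)) R := by
    rw [← ball_union_sphere]
    symm
    exact union_ae_eq_left_of_ae_eq_empty (ae_eq_empty.2 (Measure.addHaar_sphere_of_ne_zero _ _ hR.ne'))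
  have hae2 := measure_congr (hae.inter
    (Filter.EventuallyEq.refl (ae volume) (ball (pc c) s : Set (EuclideanSpace ℝ (Fin 2)))))
  have hsub : (ball (0 : EuclideanSpace ℝ (Fin 2)) R ∩ ball (pc c) s) ⊆
      (closedBall (0 : EuclideanSpace ℝ (Fin 2)) Q ∩ ball (pc c) s) :=
    inter_subset_inter_left _ (ball_subset_closedBall.trans (closedBall_subset_closedBall hRQ.le))
  have hfin : ∀ A : Set (EuclideanSpace ℝ (Fin 2)), volume (A ∩ ball (pc c) s) ≠ ⊤ := fun A =>
    ((measure_mono inter_subset_right).trans_lt measure_ball_lt_top).ne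
  rw [e, measure_sdiff hsub (measurableSet_ball.inter measurableSet_ball).nullMeasurableSet
    (hfin _), ENNReal.toReal_sub_of_le (measure_mono hsub) (hfin _), hae2]

/-- With `γ c = vol(A_{R,Q} ∩ B((c,0),s))` and, for `r ∈ {R,Q}`, `y_r c` the
maximal second coordinate of a point of `C(O,r) ∩ C((c,0),s)` (or `0` if the intersection is
empty), `γ` has derivative `2 * y_R c - 2 * y_Q c` at every `c > 0`. -/
theorem gamma_hasDerivAt
    (R Q s : ℝ) (hR : 0 < R) (hRQ : R < Q) (hs : 0 < s)
    (γ yR yQ : ℝ → ℝ)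
    (hγ : ∀ c, γ c =
      (volume ({p : EuclideanSpace ℝ (Fin 2) | R ≤ ‖p‖ ∧ ‖p‖ ≤ Q} ∩ ball (pc c) s)).toReal)
    (hyR : ∀ c, yR c =
      if (sphere (0 : EuclideanSpace ℝ (Fin 2)) R ∩ sphere (pc c) s).Nonempty then
        sSup ((fun p : EuclideanSpace ℝ (Fin 2) => p 1) ''
          (sphere (0 : EuclideanSpace ℝ (Fin 2)) R ∩ sphere (pc c) s))
      else 0)
    (hyQ : ∀ c, yQ c =
      if (sphere (0 : EuclideanSpace ℝ (Fin 2)) Q ∩ sphere (pc c) s).Nonempty then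
        sSup ((fun p : EuclideanSpace ℝ (Fin 2) => p 1) ''
          (sphere (0 : EuclideanSpace ℝ (Fin 2)) Q ∩ sphere (pc c) s))
      else 0) :
    ∀ c, 0 < c → HasDerivAt γ (2 * yR c - 2 * yQ c) c := by
  intro c hc
  have hγ' : γ = fun c => (∫ y in Ioo (-Q) Q, sliceLen Q s c y)
      - ∫ y in Ioo (-R) R, sliceLen R s c y := by
    funext c
    rw [hγ, annulus_eq R Q s c hR hRQ, volume_lens Q s c (hR.trans hRQ) hs,
      volume_lens R s c hR hs]
  rw [hyR, hyQ, y_eq R s c hR hs hc, y_eq Q s c (hR.trans hRQ) hs hc, hγ']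
  have h := (integral_sliceLen_deriv Q s c (hR.trans hRQ) hs hc).sub
    (integral_sliceLen_deriv R s c hR hs hc)
  exact h.congr_deriv (by ring)
end

section
/- Fix 0 < R < Q and 0 < w < 1, set a = w/(πR²) and b = (1−w)/(π(Q²−R²)), and assume a < b. Let μ be the measure on the Euclidean plane with density f with respect to 2-dimensional Lebesgue measure, where f(p) = a if ‖p‖ < R, f(p) = b if R ≤ ‖p‖ ≤ Q, and f(p) = 0 if ‖p‖ > Q. For s > 0 define ν_s : [0,Q] → [0,1] by ν_s(c) = μ(B(p_c,s)). Then for every s > 0 there exists ω ∈ [0,Q] such that ν_s is non-decreasing on [0,ω] and non-increasing on [ω,Q]. -/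
open Set MeasureTheory Metric

/-- Sixteen times the squared area of the triangle with sides `r, s, c`. -/
noncomputable def gg (r s c : ℝ) : ℝ := 4 * c ^ 2 * s ^ 2 - (c ^ 2 + s ^ 2 - r ^ 2) ^ 2

/-- Half length of the common chord. -/
noncomputable def hh (r s c : ℝ) : ℝ := Real.sqrt (gg r s c) / (2 * c)

lemma real_ident (u v c1 c2 : ℝ) (hu : 0 < u) (hv : 0 < v) (h1 : 0 ≤ c1) (h12 : c1 ≤ c2) :
    ENNReal.ofReal (min u (c1 + v) - max (-u) (c1 - v)) =
    ENNReal.ofReal (min u (c2 + v) - max (-u) (c2 - v)) +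
    ENNReal.ofReal (min c2 (u + v) - max c1 |u - v|) := by
  have key : ∀ x : ℝ, ENNReal.ofReal x = ENNReal.ofReal (max x 0) := by
    intro x
    rcases le_total x 0 with h | h
    · rw [max_eq_right h, ENNReal.ofReal_of_nonpos h, ENNReal.ofReal_zero]
    · rw [max_eq_left h]
  rw [key, key (min u (c2 + v) - max (-u) (c2 - v)), key (min c2 (u + v) - max c1 |u - v|),
    ← ENNReal.ofReal_add (le_max_right _ _) (le_max_right _ _)]
  congr 1
  grind

lemma strip (r s c1 c2 y : ℝ) (hr : 0 < r) (hs : 0 < s) (h1 : 0 ≤ c1) (h12 : c1 ≤ c2) :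
    volume {x : ℝ | x ^ 2 + y ^ 2 < r ^ 2 ∧ (x - c1) ^ 2 + y ^ 2 < s ^ 2} =
    volume {x : ℝ | x ^ 2 + y ^ 2 < r ^ 2 ∧ (x - c2) ^ 2 + y ^ 2 < s ^ 2} +
    volume {c : ℝ | (c1 < c ∧ c < c2) ∧ 4 * c ^ 2 * y ^ 2 < gg r s c} := by
  by_cases hy : y ^ 2 < r ^ 2 ∧ y ^ 2 < s ^ 2
  · obtain ⟨hyr, hys⟩ := hy
    obtain ⟨u, hu, hu2⟩ : ∃ u : ℝ, 0 < u ∧ u ^ 2 = r ^ 2 - y ^ 2 :=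
      ⟨Real.sqrt (r ^ 2 - y ^ 2), Real.sqrt_pos.2 (by linarith), Real.sq_sqrt (by linarith)⟩
    obtain ⟨v, hv, hv2⟩ : ∃ v : ℝ, 0 < v ∧ v ^ 2 = s ^ 2 - y ^ 2 :=
      ⟨Real.sqrt (s ^ 2 - y ^ 2), Real.sqrt_pos.2 (by linarith), Real.sq_sqrt (by linarith)⟩
    have e : ∀ c : ℝ, {x : ℝ | x ^ 2 + y ^ 2 < r ^ 2 ∧ (x - c) ^ 2 + y ^ 2 < s ^ 2} =
        Ioo (max (-u) (c - v)) (min u (c + v)) := by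
      intro c
      ext x
      simp only [mem_ofPred_eq, mem_Ioo, max_lt_iff, lt_min_iff]
      have a1 : x ^ 2 + y ^ 2 < r ^ 2 ↔ -u < x ∧ x < u := by
        rw [← abs_lt, ← abs_of_pos hu, ← sq_lt_sq, hu2, lt_sub_iff_add_lt]
      have a2 : (x - c) ^ 2 + y ^ 2 < s ^ 2 ↔ -v < x - c ∧ x - c < v := by
        rw [← abs_lt, ← abs_of_pos hv, ← sq_lt_sq, hv2, lt_sub_iff_add_lt]
      rw [a1, a2]
      constructor
      · rintro ⟨⟨_, _⟩, _, _⟩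
        refine ⟨⟨?_, ?_⟩, ?_, ?_⟩ <;> linarith
      · rintro ⟨⟨_, _⟩, _, _⟩
        refine ⟨⟨?_, ?_⟩, ?_, ?_⟩ <;> linarith
    have e3 : {c : ℝ | (c1 < c ∧ c < c2) ∧ 4 * c ^ 2 * y ^ 2 < gg r s c} =
        Ioo (max c1 |u - v|) (min c2 (u + v)) := by
      ext c
      simp only [mem_ofPred_eq, mem_Ioo, max_lt_iff, lt_min_iff]
      have a3 : 0 < c → (4 * c ^ 2 * y ^ 2 < gg r s c ↔ |u - v| < c ∧ c < u + v) := by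
        intro hc
        have : gg r s c - 4 * c ^ 2 * y ^ 2 = (c ^ 2 - (u - v) ^ 2) * ((u + v) ^ 2 - c ^ 2) := by
          have hr2 : r ^ 2 = u ^ 2 + y ^ 2 := by linarith
          have hs2 : s ^ 2 = v ^ 2 + y ^ 2 := by linarith
          unfold gg
          rw [hr2, hs2]; ring
        have b1 : |u - v| < c ↔ (u - v) ^ 2 < c ^ 2 := by
          rw [sq_lt_sq, abs_of_pos hc]
        have b2 : c < u + v ↔ c ^ 2 < (u + v) ^ 2 := by
          rw [sq_lt_sq, abs_of_pos hc, abs_of_pos (by linarith)]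
        rw [b1, b2, ← sub_pos, this]
        have huv : (u - v) ^ 2 < (u + v) ^ 2 := by nlinarith
        constructor
        · intro h
          rcases pos_and_pos_or_neg_and_neg_of_mul_pos h with h | h
          · constructor <;> linarith [h.1, h.2]
          · linarith [h.1, h.2]
        · rintro ⟨h, h'⟩
          exact mul_pos (by linarith) (by linarith)
      constructor
      · rintro ⟨⟨p, q⟩, h⟩
        have := (a3 (by linarith)).1 h
        exact ⟨⟨p, this.1⟩, q, this.2⟩
      · rintro ⟨⟨p, h⟩, q, h'⟩
        exact ⟨⟨p, q⟩, (a3 (by linarith)).2 ⟨h, h'⟩⟩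
    rw [e, e, e3, Real.volume_Ioo, Real.volume_Ioo, Real.volume_Ioo]
    exact real_ident u v c1 c2 hu hv h1 h12
  · have e : ∀ c : ℝ, {x : ℝ | x ^ 2 + y ^ 2 < r ^ 2 ∧ (x - c) ^ 2 + y ^ 2 < s ^ 2} = ∅ := by
      intro c
      ext x
      simp only [mem_ofPred_eq, mem_empty_iff_false, iff_false]
      rintro ⟨h, h'⟩
      exact hy ⟨by nlinarith, by nlinarith [sq_nonneg (x - c)]⟩
    have e3 : {c : ℝ | (c1 < c ∧ c < c2) ∧ 4 * c ^ 2 * y ^ 2 < gg r s c} = ∅ := by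
      ext c
      simp only [mem_ofPred_eq, mem_empty_iff_false, iff_false]
      rintro ⟨⟨h, _⟩, h'⟩
      have hc : 0 < 4 * c ^ 2 := by have : 0 < c := by linarith
                                    positivity
      have g2 : gg r s c = 4 * c ^ 2 * r ^ 2 - (c ^ 2 + r ^ 2 - s ^ 2) ^ 2 := by
        unfold gg; ring
      refine hy ⟨lt_of_mul_lt_mul_left (a := 4 * c ^ 2) ?_ hc.le, 
        lt_of_mul_lt_mul_left (a := 4 * c ^ 2) ?_ hc.le⟩
      · rw [g2] at h'
        linarith [sq_nonneg (c ^ 2 + r ^ 2 - s ^ 2)]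
      · unfold gg at h'
        linarith [sq_nonneg (c ^ 2 + s ^ 2 - r ^ 2)]
    rw [e, e, e3]; simp

/-- The lens in the product plane. -/
def lens (r s c : ℝ) : Set (ℝ × ℝ) :=
  {p | p.1 ^ 2 + p.2 ^ 2 < r ^ 2 ∧ (p.1 - c) ^ 2 + p.2 ^ 2 < s ^ 2}

lemma lens_meas (r s c : ℝ) : MeasurableSet (lens r s c) := by
  have m1 : MeasurableSet {p : ℝ × ℝ | p.1 ^ 2 + p.2 ^ 2 < r ^ 2} :=
    measurableSet_lt (by fun_prop) (by fun_prop)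
  have m2 : MeasurableSet {p : ℝ × ℝ | (p.1 - c) ^ 2 + p.2 ^ 2 < s ^ 2} :=
    measurableSet_lt (by fun_prop) (by fun_prop)
  exact m1.inter m2

lemma lens_diff (r s c1 c2 : ℝ) (hr : 0 < r) (hs : 0 < s) (h1 : 0 ≤ c1) (h12 : c1 ≤ c2) :
    volume (lens r s c1) = volume (lens r s c2) +
      ∫⁻ c in Ioo c1 c2, ENNReal.ofReal (2 * hh r s c) := by
  have hE : MeasurableSet
      {p : ℝ × ℝ | (c1 < p.1 ∧ p.1 < c2) ∧ 4 * p.1 ^ 2 * p.2 ^ 2 < gg r s p.1} := by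
    have m1 : MeasurableSet {p : ℝ × ℝ | c1 < p.1} :=
      measurableSet_lt (by fun_prop) (by fun_prop)
    have m2 : MeasurableSet {p : ℝ × ℝ | p.1 < c2} :=
      measurableSet_lt (by fun_prop) (by fun_prop)
    have m3 : MeasurableSet {p : ℝ × ℝ | 4 * p.1 ^ 2 * p.2 ^ 2 < gg r s p.1} := by
      unfold gg
      exact measurableSet_lt (by fun_prop) (by fun_prop)
    exact (m1.inter m2).inter m3
  have h3 : ∫⁻ c in Ioo c1 c2, ENNReal.ofReal (2 * hh r s c) =
      volume {p : ℝ × ℝ | (c1 < p.1 ∧ p.1 < c2) ∧ 4 * p.1 ^ 2 * p.2 ^ 2 < gg r s p.1} := by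
    rw [Measure.volume_eq_prod, Measure.prod_apply hE, ← lintegral_indicator measurableSet_Ioo]
    refine lintegral_congr fun c => ?_
    by_cases hc : c ∈ Ioo c1 c2
    · rw [indicator_of_mem hc]
      have hc0 : 0 < c := lt_of_le_of_lt h1 hc.1
      have : (Prod.mk c ⁻¹' {p : ℝ × ℝ | (c1 < p.1 ∧ p.1 < c2) ∧
          4 * p.1 ^ 2 * p.2 ^ 2 < gg r s p.1}) = Ioo (-(hh r s c)) (hh r s c) := by
        ext y
        simp only [mem_preimage, mem_ofPred_eq, mem_Ioo]
        have h2c : 0 < 2 * c := by linarith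
        rw [← abs_lt, hh, lt_div_iff₀ h2c, Real.lt_sqrt (by positivity), mul_pow, sq_abs]
        constructor
        · rintro ⟨_, h⟩
          linarith
        · intro h
          exact ⟨hc, by linarith⟩
      rw [this, Real.volume_Ioo]
      congr 1; ring
    · rw [indicator_of_notMem hc]
      have : (Prod.mk c ⁻¹' {p : ℝ × ℝ | (c1 < p.1 ∧ p.1 < c2) ∧
          4 * p.1 ^ 2 * p.2 ^ 2 < gg r s p.1}) = ∅ := by
        ext y
        simp only [mem_preimage, mem_ofPred_eq, mem_empty_iff_false, iff_false]
        exact fun h => hc h.1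
      rw [this, measure_empty]
  rw [h3, Measure.volume_eq_prod, Measure.prod_apply_symm (lens_meas _ _ _),
    Measure.prod_apply_symm (lens_meas _ _ _), Measure.prod_apply_symm hE,
    ← lintegral_add_left (measurable_measure_prodMk_right (lens_meas _ _ _))]
  refine lintegral_congr fun y => ?_
  exact strip r s c1 c2 y hr hs h1 h12

lemma lens_vol (r s c : ℝ) (hr : 0 < r) (hs : 0 < s) :
    volume (ball (0 : EuclideanSpace ℝ (Fin 2)) r ∩ ball (pc c) s) = volume (lens r s c) := by
  have hm : MeasurePreserving (fun p : EuclideanSpace ℝ (Fin 2) => (p 0, p 1)) :=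
    (volume_preserving_finTwoArrow ℝ).comp (PiLp.volume_preserving_ofLp (Fin 2))
  rw [← hm.measure_preimage (lens_meas _ _ _).nullMeasurableSet]
  congr 1
  ext p
  simp only [mem_inter_iff, mem_ball, lens, mem_preimage, mem_ofPred_eq, EuclideanSpace.dist_eq,
    Fin.sum_univ_two, Real.dist_eq, sq_abs, pc]
  rw [Real.sqrt_lt' hr, Real.sqrt_lt' hs]
  simp

lemma crossing (R Q s k t0 t : ℝ) (hR : 0 < R) (hRQ : R < Q) (hs : 0 < s) (hk0 : 0 < k)
    (hk1 : k < 1) (ht0 : 0 < t0) (htt : t0 < t)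
    (h0 : 0 < 4 * t0 * s ^ 2 - (t0 + s ^ 2 - Q ^ 2) ^ 2)
    (h0' : k * (4 * t0 * s ^ 2 - (t0 + s ^ 2 - R ^ 2) ^ 2) <
      4 * t0 * s ^ 2 - (t0 + s ^ 2 - Q ^ 2) ^ 2)
    (h1 : 0 < 4 * t * s ^ 2 - (t + s ^ 2 - R ^ 2) ^ 2) :
    k * (4 * t * s ^ 2 - (t + s ^ 2 - R ^ 2) ^ 2) ≤ 4 * t * s ^ 2 - (t + s ^ 2 - Q ^ 2) ^ 2 := by
  have e : ∀ r x : ℝ, 4 * x * s ^ 2 - (x + s ^ 2 - r ^ 2) ^ 2 =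
      (x - (r - s) ^ 2) * ((r + s) ^ 2 - x) := by intro r x; ring
  have hRs : (R - s) ^ 2 < (R + s) ^ 2 := by nlinarith [mul_pos hR hs]
  have hQs : (Q - s) ^ 2 < (Q + s) ^ 2 := by nlinarith [mul_pos (hR.trans hRQ) hs]
  have ht1 : (R - s) ^ 2 < t ∧ t < (R + s) ^ 2 := by
    rw [e] at h1
    rcases pos_and_pos_or_neg_and_neg_of_mul_pos h1 with h | h
    · constructor <;> linarith [h.1, h.2]
    · linarith [h.1, h.2]
  by_cases hc : (R - s) ^ 2 < t0
  · by_contra hcon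
    push Not at hcon
    set T := (R + s) ^ 2 with hT
    have hTQ : T < (Q + s) ^ 2 := by rw [hT]; nlinarith
    -- the function is concave, nonneg at `T`
    have hQt0 : (Q - s) ^ 2 < t0 := by
      rw [e] at h0
      rcases pos_and_pos_or_neg_and_neg_of_mul_pos h0 with h | h
      · linarith [h.1, h.2]
      · linarith [h.1, h.2]
    have hDT : 0 ≤ (4 * T * s ^ 2 - (T + s ^ 2 - Q ^ 2) ^ 2) -
        k * (4 * T * s ^ 2 - (T + s ^ 2 - R ^ 2) ^ 2) := by
      rw [e R T, e Q T, ← hT]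
      have : 0 ≤ (T - (Q - s) ^ 2) * ((Q + s) ^ 2 - T) :=
        mul_nonneg (by linarith [ht1.2]) (by linarith)
      linarith
    -- concavity
    have conc : (T - t0) * ((4 * t * s ^ 2 - (t + s ^ 2 - Q ^ 2) ^ 2) -
        k * (4 * t * s ^ 2 - (t + s ^ 2 - R ^ 2) ^ 2)) =
        (T - t) * ((4 * t0 * s ^ 2 - (t0 + s ^ 2 - Q ^ 2) ^ 2) -
        k * (4 * t0 * s ^ 2 - (t0 + s ^ 2 - R ^ 2) ^ 2)) +
        (t - t0) * ((4 * T * s ^ 2 - (T + s ^ 2 - Q ^ 2) ^ 2) -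
        k * (4 * T * s ^ 2 - (T + s ^ 2 - R ^ 2) ^ 2)) +
        (1 - k) * ((T - t) * (t - t0) * (T - t0)) := by
      clear_value T
      ring
    have p1 : 0 < T - t := by linarith [ht1.2]
    have p2 : 0 < t - t0 := by linarith
    have p3 : 0 < T - t0 := by linarith
    have q0 := mul_pos p1 (sub_pos.2 h0')
    have q1 := mul_nonneg p2.le hDT
    have q2 : 0 < (1 - k) * ((T - t) * (t - t0) * (T - t0)) :=
      mul_pos (by linarith) (mul_pos (mul_pos p1 p2) p3)
    have q3 := mul_pos p3 (sub_pos.2 hcon)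
    linarith
  · push Not at hc
    have hQt0 : (Q - s) ^ 2 < t0 := by
      rw [e] at h0
      rcases pos_and_pos_or_neg_and_neg_of_mul_pos h0 with h | h
      · linarith [h.1, h.2]
      · linarith [h.1, h.2]
    have hsQ : Q + R < 2 * s := by nlinarith
    have : 0 < 2 * t + 2 * s ^ 2 - R ^ 2 - Q ^ 2 := by nlinarith [ht1.1]
    have hd : 0 ≤ (Q ^ 2 - R ^ 2) * (2 * t + 2 * s ^ 2 - R ^ 2 - Q ^ 2) :=
      mul_nonneg (by nlinarith) this.le
    nlinarith

lemma hh_bound (r s c : ℝ) (hs : 0 < s) (hc : 0 < c) : hh r s c ≤ s := by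
  unfold hh
  rw [div_le_iff₀ (by linarith)]
  apply Real.sqrt_le_iff.2 ⟨by positivity, ?_⟩
  unfold gg
  nlinarith [sq_nonneg (c ^ 2 + s ^ 2 - r ^ 2)]

lemma hh_nonneg (r s c : ℝ) (hc : 0 ≤ c) : 0 ≤ hh r s c := by
  unfold hh; positivity

lemma hh_meas (r s : ℝ) : Measurable (hh r s) := by
  unfold hh gg; fun_prop

lemma hh_int (r s c1 c2 : ℝ) (hs : 0 < s) (h1 : 0 ≤ c1) :
    IntegrableOn (hh r s) (Ioo c1 c2) := by
  refine Measure.integrableOn_of_bounded (M := s) (by simp) (hh_meas r s).aestronglyMeasurable ?_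
  filter_upwards [ae_restrict_mem measurableSet_Ioo] with c hc
  have hc0 : 0 < c := lt_of_le_of_lt h1 hc.1
  rw [Real.norm_of_nonneg (hh_nonneg r s c hc0.le)]
  exact hh_bound r s c hs hc0

lemma crossing_hh (R Q s k c0 c : ℝ) (hR : 0 < R) (hRQ : R < Q) (hs : 0 < s) (hk0 : 0 < k)
    (hk1 : k < 1) (hc0 : 0 < c0) (hcc : c0 < c) (h0 : k * hh R s c0 < hh Q s c0) :
    k * hh R s c ≤ hh Q s c := by
  have hc : 0 < c := hc0.trans hcc
  unfold hh at h0 ⊢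
  rw [← mul_div_assoc] at h0 ⊢
  rw [div_lt_div_iff_of_pos_right (by linarith)] at h0
  rw [div_le_div_iff_of_pos_right (by linarith)]
  have hks : k = Real.sqrt (k ^ 2) := (Real.sqrt_sq hk0.le).symm
  have hkk : ∀ x : ℝ, k * Real.sqrt x = Real.sqrt (k ^ 2 * x) := by
    intro x
    rw [Real.sqrt_mul (sq_nonneg k), Real.sqrt_sq hk0.le]
  rw [hkk] at h0 ⊢
  rcases le_or_gt (gg R s c) 0 with hg | hg
  · rw [Real.sqrt_eq_zero_of_nonpos (by nlinarith [sq_nonneg k])]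
    positivity
  · have hlt := lt_of_not_ge fun h => not_le_of_gt h0 (Real.sqrt_le_sqrt h)
    have hpos : 0 < gg Q s c0 := Real.sqrt_pos.1 (lt_of_le_of_lt (Real.sqrt_nonneg _) h0)
    apply Real.sqrt_le_sqrt
    exact crossing R Q s (k ^ 2) (c0 ^ 2) (c ^ 2) hR hRQ hs (by positivity) (by nlinarith)
      (by positivity) (by nlinarith) hpos hlt hg

lemma nu_diff (R Q a b : ℝ) (hR : 0 < R) (hRQ : R < Q) (ha : 0 < a) (hab : a < b)
    (μ : Measure (EuclideanSpace ℝ (Fin 2)))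
    (hμ : μ = volume.withDensity (fun p =>
      if ‖p‖ < R then ENNReal.ofReal a else if ‖p‖ ≤ Q then ENNReal.ofReal b else 0))
    (s : ℝ) (hs : 0 < s) (c : ℝ) :
    (μ (ball (pc c) s)).toReal =
      b * (volume (lens Q s c)).toReal - (b - a) * (volume (lens R s c)).toReal := by
  have fin : ∀ r, 0 < r → volume (lens r s c) ≠ ⊤ := by
    intro r hr
    rw [← lens_vol r s c hr hs]
    exact ((measure_mono inter_subset_left).trans_lt measure_ball_lt_top).ne
  have hQ := hR.trans hRQ
  have hclosed : volume (closedBall (0 : EuclideanSpace ℝ (Fin 2)) Q ∩ ball (pc c) s) =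
      volume (lens Q s c) := by
    rw [← lens_vol Q s c hQ hs]
    apply measure_congr
    refine Filter.EventuallyEq.inter ?_ (Filter.EventuallyEq.refl _ _)
    rw [← ball_union_sphere]
    exact union_ae_eq_left_of_ae_eq_empty (ae_eq_empty.2 (Measure.addHaar_sphere _ _ _))
  have key : μ (ball (pc c) s) + ENNReal.ofReal (b - a) * volume (lens R s c) =
      ENNReal.ofReal b * volume (lens Q s c) := by
    rw [← hclosed, ← lens_vol R s c hR hs, hμ, withDensity_apply _ measurableSet_ball,
      ← Measure.restrict_apply measurableSet_ball, ← Measure.restrict_apply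
        measurableSet_closedBall, ← lintegral_indicator_const measurableSet_ball,
      ← lintegral_indicator_const measurableSet_closedBall, ← lintegral_add_right _
        (measurable_const.indicator measurableSet_ball)]
    refine lintegral_congr fun p => ?_
    by_cases h1 : ‖p‖ < R
    · have h2 : ‖p‖ ≤ Q := by linarith
      simp only [indicator, mem_ball_zero_iff, mem_closedBall_zero_iff, h1, h2, if_true]
      rw [← ENNReal.ofReal_add ha.le (by linarith)]
      congr 1; ring
    · by_cases h2 : ‖p‖ ≤ Q <;>
      simp [indicator, mem_ball_zero_iff, mem_closedBall_zero_iff, h1, h2]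
  have hfin : μ (ball (pc c) s) ≠ ⊤ := by
    intro h
    rw [h, top_add] at key
    exact ENNReal.mul_ne_top ENNReal.ofReal_ne_top (fin Q hQ) key.symm
  have := congrArg ENNReal.toReal key
  rw [ENNReal.toReal_add hfin (ENNReal.mul_ne_top ENNReal.ofReal_ne_top (fin R hR)),
    ENNReal.toReal_mul, ENNReal.toReal_mul, ENNReal.toReal_ofReal (by linarith),
    ENNReal.toReal_ofReal (by linarith)] at this
  linarith

lemma lens_real (r s c1 c2 : ℝ) (hr : 0 < r) (hs : 0 < s) (h1 : 0 ≤ c1) (h12 : c1 ≤ c2) :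
    (volume (lens r s c1)).toReal = (volume (lens r s c2)).toReal +
      2 * ∫ c in Ioo c1 c2, hh r s c := by
  have fin : ∀ c, volume (lens r s c) ≠ ⊤ := by
    intro c
    rw [← lens_vol r s c hr hs]
    exact ((measure_mono inter_subset_left).trans_lt measure_ball_lt_top).ne
  have h := lens_diff r s c1 c2 hr hs h1 h12
  have e : ∫⁻ c in Ioo c1 c2, ENNReal.ofReal (2 * hh r s c) =
      ENNReal.ofReal (∫ c in Ioo c1 c2, 2 * hh r s c) := by
    rw [ofReal_integral_eq_lintegral_ofReal ((hh_int r s c1 c2 hs h1).const_mul 2)]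
    filter_upwards [ae_restrict_mem measurableSet_Ioo] with c hc
    have := hh_nonneg r s c (by linarith [hc.1])
    simp only [Pi.zero_apply]
    linarith
  rw [h, e, ENNReal.toReal_add (fin _) ENNReal.ofReal_ne_top, ENNReal.toReal_ofReal,
    integral_const_mul]
  refine setIntegral_nonneg measurableSet_Ioo fun c hc => ?_
  have := hh_nonneg r s c (by linarith [hc.1])
  linarith

/-- For the weighted annulus measure `μ = W(R,Q,w)` with inner density
`a = w/(πR²)` less than the annulus density `b = (1-w)/(π(Q²-R²))`, and any `s > 0`, the
function `ν_s(c) = μ(B((c,0),s))` is unimodal on `[0,Q]`: there is `ω ∈ [0,Q]` such that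
`ν_s` is non-decreasing on `[0,ω]` and non-increasing on `[ω,Q]`. -/
theorem weighted_annulus_nu_unimodal
    (R Q w a b : ℝ) (hR : 0 < R) (hRQ : R < Q) (hw0 : 0 < w) (hw1 : w < 1)
    (ha : a = w / (Real.pi * R ^ 2))
    (hb : b = (1 - w) / (Real.pi * (Q ^ 2 - R ^ 2)))
    (hab : a < b)
    (μ : Measure (EuclideanSpace ℝ (Fin 2)))
    (hμ : μ = volume.withDensity (fun p =>
      if ‖p‖ < R then ENNReal.ofReal a else if ‖p‖ ≤ Q then ENNReal.ofReal b else 0))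
    (s : ℝ) (hs : 0 < s)
    (ν : ℝ → ℝ) (hν : ∀ c, ν c = (μ (ball (pc c) s)).toReal) :
    ∃ ω ∈ Icc (0:ℝ) Q, MonotoneOn ν (Icc 0 ω) ∧ AntitoneOn ν (Icc ω Q) := by
  have ha0 : 0 < a := by
    rw [ha]
    have := Real.pi_pos
    positivity
  have hb0 : 0 < b := ha0.trans hab
  have hQ : 0 < Q := hR.trans hRQ
  obtain ⟨k, hk⟩ : ∃ k, k = (b - a) / b := ⟨_, rfl⟩
  have hkb : b - a = b * k := by rw [hk]; field_simp
  have hk0 : 0 < k := by rw [hk]; exact div_pos (by linarith) hb0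
  have hk1 : k < 1 := by rw [hk, div_lt_one hb0]; linarith
  have diff : ∀ c1 c2, 0 ≤ c1 → c1 ≤ c2 → ν c2 - ν c1 =
      2 * b * (k * (∫ c in Ioo c1 c2, hh R s c) - ∫ c in Ioo c1 c2, hh Q s c) := by
    intro c1 c2 h1 h12
    rw [hν, hν, nu_diff R Q a b hR hRQ ha0 hab μ hμ s hs, nu_diff R Q a b hR hRQ ha0 hab μ hμ s hs,
      lens_real R s c1 c2 hR hs h1 h12, lens_real Q s c1 c2 hQ hs h1 h12, hkb]
    ring
  have up : ∀ c1 c2, 0 ≤ c1 → c1 ≤ c2 → (∀ c ∈ Ioo c1 c2, hh Q s c ≤ k * hh R s c) →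
      ν c1 ≤ ν c2 := by
    intro c1 c2 h1 h12 h
    have hi : ∫ c in Ioo c1 c2, hh Q s c ≤ ∫ c in Ioo c1 c2, k * hh R s c :=
      setIntegral_mono_on (hh_int Q s c1 c2 hs h1) ((hh_int R s c1 c2 hs h1).const_mul k)
        measurableSet_Ioo h
    rw [integral_const_mul] at hi
    have := mul_nonneg (by linarith : 0 ≤ 2 * b) (sub_nonneg.2 hi)
    linarith [diff c1 c2 h1 h12]
  have down : ∀ c1 c2, 0 ≤ c1 → c1 ≤ c2 → (∀ c ∈ Ioo c1 c2, k * hh R s c ≤ hh Q s c) →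
      ν c2 ≤ ν c1 := by
    intro c1 c2 h1 h12 h
    have hi : ∫ c in Ioo c1 c2, k * hh R s c ≤ ∫ c in Ioo c1 c2, hh Q s c :=
      setIntegral_mono_on ((hh_int R s c1 c2 hs h1).const_mul k) (hh_int Q s c1 c2 hs h1)
        measurableSet_Ioo h
    rw [integral_const_mul] at hi
    have := mul_nonneg (by linarith : 0 ≤ 2 * b) (sub_nonneg.2 hi)
    linarith [diff c1 c2 h1 h12]
  -- the turning point
  let S : Set ℝ := {c | c = Q ∨ (0 < c ∧ c < Q ∧ k * hh R s c < hh Q s c)}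
  have hSQ : Q ∈ S := Or.inl rfl
  have hS0 : ∀ c ∈ S, 0 ≤ c := by
    rintro c (h | h)
    · linarith
    · exact h.1.le
  have hbdd : BddBelow S := ⟨0, hS0⟩
  have hω0 : 0 ≤ sInf S := le_csInf ⟨Q, hSQ⟩ hS0
  have hωQ : sInf S ≤ Q := csInf_le hbdd hSQ
  refine ⟨sInf S, ⟨hω0, hωQ⟩, ?_, ?_⟩
  · intro x hx y hy hxy
    refine up x y hx.1 hxy fun c hc => ?_
    by_contra hcon
    push Not at hcon
    have hcω : c < sInf S := lt_of_lt_of_le hc.2 hy.2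
    have : c ∈ S := Or.inr ⟨lt_of_le_of_lt hx.1 hc.1, by linarith, hcon⟩
    linarith [csInf_le hbdd this]
  · intro x hx y hy hxy
    refine down x y (hω0.trans hx.1) hxy fun c hc => ?_
    have hcω : sInf S < c := lt_of_le_of_lt hx.1 hc.1
    obtain ⟨c0, hc0, hlt⟩ := exists_lt_of_csInf_lt ⟨Q, hSQ⟩ hcω
    rcases hc0 with h | h
    · linarith [hc.2, hy.2]
    · exact crossing_hh R Q s k c0 c hR hRQ hs hk0 hk1 h.1 hlt h.2.2
end
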